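/- Let S_0, S_1, S_2, S_3, S_4 be five sets of five points each in ℝ^4 such that every 5-element subset of S_0 ∪ S_1 ∪ S_2 ∪ S_3 ∪ S_4 ∪ {0} is affinely independent (general position) and the origin 0 lies in the interior of the convex hull of S_i for each i = 0,1,2,3,4. Then the number of colourful simplices containing the origin, i.e. the number of tuples (x_0,x_1,x_2,x_3,x_4) ∈ S_0 × S_1 × S_2 × S_3 × S_4 with 0 ∈ conv{x_0,x_1,x_2,x_3,x_4}, is at least 14. In other words, the minimal colourful simplicial depth satisfies μ(4) ≥ 14. -/

import Mathlib

/-!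
The tuples of vertices spanning a simplex that contains the origin form an octahedral system: if
two points of each colour are selected, an even number of the resulting tuples are in it. Indeed,
for a generic vector `w`, the origin lies in a simplex iff an odd number of the cones over its
facets contain `w`, and each facet belongs to two of the simplices. Moreover, by the colourful
Carathéodory theorem, every point is a vertex of a simplex containing the origin.

An octahedral system with at least five vertices in each of at least five colours and no isolated
vertex has at least fourteen edges. Otherwise every colour has at least two vertices of degree at
most two, and any two such vertices of one colour are interchangeable in all edges. If no edge
contains such vertices of two colours, then each colour accounts for three edges of its own, which
makes fifteen; if some edge does, then all edges agree in the remaining colours and miss vertices.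
-/

namespace ColourfulDepth

open Finset Function Module

section Octahedral

/-- An octahedral system, encoded by its edge set: any choice of two vertices of every colour
induces an even number of edges. -/
def IsOctahedral {ι : Type*} {α : ι → Type*} [Fintype ι] [∀ i, DecidableEq (α i)]
    (E : Finset (∀ i, α i)) : Prop :=
  ∀ y z : ∀ i, α i, (∀ i, y i ≠ z i) → Even #{x ∈ E | ∀ i, x i = y i ∨ x i = z i}

/-- The number of edges of the multipartite hypergraph `E` through the vertex `v` of colour `i`. -/
def degree {ι : Type*} {α : ι → Type*} [∀ i, DecidableEq (α i)]
    (E : Finset (∀ i, α i)) (i : ι) (v : α i) : ℕ :=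
  #{x ∈ E | x i = v}

/-- The vertices of colour `i` of degree at most two. With five vertices per colour, two such
vertices have total degree less than five, which makes them interchangeable in every edge. -/
def lowVertices {ι : Type*} {α : ι → Type*} [∀ i, Fintype (α i)] [∀ i, DecidableEq (α i)]
    (E : Finset (∀ i, α i)) (i : ι) : Finset (α i) :=
  {v | degree E i v ≤ 2}

section Degree

variable {ι : Type*} {α : ι → Type*} [∀ i, DecidableEq (α i)] {E : Finset (∀ i, α i)} {i : ι}

lemma card_filter_eq_or_eq_le (a b : α i) :
    #{y ∈ E | y i = a ∨ y i = b} ≤ degree E i a + degree E i b := by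
  classical
  rw [filter_or]
  exact card_union_le _ _

lemma degree_le_degree_of_update_mem [DecidableEq ι] {a b : α i}
    (hab : ∀ x ∈ E, x i = a → update x i b ∈ E) : degree E i a ≤ degree E i b := by
  refine card_le_card_of_injOn (fun x ↦ update x i b) (fun x hx ↦ ?_) fun x hx y hy hxy ↦ ?_
  · obtain ⟨hxE, hxa⟩ := mem_filter.1 hx
    exact mem_filter.2 ⟨hab x hxE hxa, update_self ..⟩
  · have hxa : x i = a := (mem_filter.1 hx).2
    have hya : y i = a := (mem_filter.1 hy).2
    calc x = update (update x i b) i a := by rw [update_idem, ← hxa, update_eq_self]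
      _ = update (update y i b) i a := congrArg (update · i a) hxy
      _ = y := by rw [update_idem, ← hya, update_eq_self]

variable [∀ i, Fintype (α i)]

lemma mem_lowVertices {v : α i} : v ∈ lowVertices E i ↔ degree E i v ≤ 2 := by
  simp only [lowVertices, mem_filter_univ]

lemma card_filter_mem_lowVertices :
    #{x ∈ E | x i ∈ lowVertices E i} = ∑ v ∈ lowVertices E i, degree E i v :=
  (sum_card_fiberwise_eq_card_filter E (lowVertices E i) (· i)).symm

lemma sum_lowVertices_add_sum_compl (E : Finset (∀ i, α i)) (i : ι) :
    ∑ v ∈ lowVertices E i, degree E i v + ∑ v ∈ (lowVertices E i)ᶜ, degree E i v = #E := by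
  rw [sum_add_sum_compl]
  exact (card_eq_sum_card_fiberwise fun x _ ↦ mem_coe.2 (mem_univ (x i))).symm

lemma degree_le_three_of_card_lowVertices_eq_two (hα : ∀ k, 5 ≤ Fintype.card (α k))
    (hE : #E ≤ 13) {i : ι} (hcard : #(lowVertices E i) = 2)
    (htwo : ∀ v ∈ lowVertices E i, degree E i v = 2) (v : α i) : degree E i v ≤ 3 := by
  by_cases hv : v ∈ lowVertices E i
  · rw [htwo v hv]
    norm_num
  rw [← mem_compl] at hv
  have hsum := sum_lowVertices_add_sum_compl E i
  rw [sum_congr rfl htwo, sum_const, hcard, ← add_sum_erase _ _ hv] at hsum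
  have hothers : ∀ u ∈ (lowVertices E i)ᶜ.erase v, 3 ≤ degree E i u := fun u hu ↦ by
    have := mem_of_mem_erase hu
    rw [mem_compl, mem_lowVertices] at this
    omega
  have hsum_others :
      #((lowVertices E i)ᶜ.erase v) • 3 ≤ ∑ u ∈ (lowVertices E i)ᶜ.erase v, degree E i u :=
    card_nsmul_le_sum _ _ 3 hothers
  have hcompl := card_add_card_compl (lowVertices E i)
  have hαi := hα i
  rw [card_erase_of_mem hv] at hsum_others
  simp only [smul_eq_mul] at hsum_others hsum
  omega

end Degree

namespace IsOctahedral

variable {ι : Type*} {α : ι → Type*} [Fintype ι]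
  [∀ i, DecidableEq (α i)] {E : Finset (∀ i, α i)}

lemma exists_mem_ne (h : IsOctahedral E) {x z : ∀ i, α i} (hx : x ∈ E) (hxz : ∀ i, x i ≠ z i) :
    ∃ w ∈ E, w ≠ x ∧ ∀ i, w i = x i ∨ w i = z i := by
  have hmem : x ∈ ({w ∈ E | ∀ i, w i = x i ∨ w i = z i} : Finset _) :=
    mem_filter.2 ⟨hx, fun _ ↦ .inl rfl⟩
  have hcard : 1 < #{w ∈ E | ∀ i, w i = x i ∨ w i = z i} := by
    obtain ⟨n, hn⟩ := h x z hxz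
    have := card_pos.2 ⟨x, hmem⟩
    omega
  obtain ⟨w, hw, hwx⟩ := Finset.exists_mem_ne hcard x
  obtain ⟨hwE, hwxz⟩ := mem_filter.1 hw
  exact ⟨w, hwE, hwx, hwxz⟩

variable [∀ i, Fintype (α i)]

-- Otherwise every colour `k ≠ i` has a vertex `T k` missed by these edges, and `x` is the only edge
-- induced by the vertices `x k`, `T k` (`k ≠ i`), `x i` and `b`.
lemma exists_image_eq_univ [DecidableEq ι] (h : IsOctahedral E) {x : ∀ i, α i} (hx : x ∈ E) {i : ι}
    {b : α i} (hb : update x i b ∉ E) :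
    ∃ k ≠ i, ({y ∈ E | y i = x i ∨ y i = b} : Finset _).image (· k) = univ := by
  have hne : ∀ k, Nonempty (α k) := fun k ↦ ⟨x k⟩
  by_contra! hmiss
  simp only [ne_eq, eq_univ_iff_forall, not_forall] at hmiss
  choose! T hT using hmiss
  have hTne : ∀ y ∈ E, (y i = x i ∨ y i = b) → ∀ k ≠ i, y k ≠ T k := fun y hy hyi k hk hyk ↦
    hT k hk (mem_image.2 ⟨y, mem_filter.2 ⟨hy, hyi⟩, hyk⟩)
  have hbx : x i ≠ b := by
    rintro rfl
    exact hb (by rwa [update_eq_self])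
  obtain ⟨w, hw, hwx, hwz⟩ := h.exists_mem_ne (z := update T i b) hx fun k ↦ by
    obtain rfl | hk := eq_or_ne k i
    · rwa [update_self]
    · rw [update_of_ne hk]
      exact hTne x hx (.inl rfl) k hk
  have hwi : w i = x i ∨ w i = b := by simpa only [update_self] using hwz i
  have hw_eq : ∀ k ≠ i, w k = x k := fun k hk ↦
    (hwz k).resolve_right (by rw [update_of_ne hk]; exact hTne w hw hwi k hk)
  rcases hwi with hwi | hwi
  · exact hwx (eq_update_iff.2 ⟨hwi, hw_eq⟩ |>.trans (update_eq_self i x))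
  · exact hb (eq_update_iff.2 ⟨hwi, hw_eq⟩ ▸ hw)

lemma update_mem_of_degree_add_lt [DecidableEq ι] {m : ℕ} (h : IsOctahedral E)
    (hα : ∀ k, m ≤ Fintype.card (α k)) {x : ∀ i, α i} (hx : x ∈ E) {i : ι} {b : α i}
    (hdeg : degree E i (x i) + degree E i b < m) : update x i b ∈ E := by
  by_contra hb
  obtain ⟨k, -, hk⟩ := h.exists_image_eq_univ hx hb
  refine hdeg.not_ge ?_
  calc m ≤ Fintype.card (α k) := hα k
    _ = #(image (· k) {y ∈ E | y i = x i ∨ y i = b}) := by rw [hk, card_univ]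
    _ ≤ #{y ∈ E | y i = x i ∨ y i = b} := card_image_le
    _ ≤ degree E i (x i) + degree E i b := card_filter_eq_or_eq_le _ _

lemma le_degree_add_of_degree_lt {m : ℕ} (h : IsOctahedral E)
    (hα : ∀ k, m ≤ Fintype.card (α k)) {i : ι} {a b : α i} (hab : degree E i a < degree E i b) :
    m ≤ degree E i a + degree E i b := by
  classical
  by_contra! hlt
  refine hab.not_ge (degree_le_degree_of_update_mem fun x hx hxb ↦ ?_)
  exact h.update_mem_of_degree_add_lt hα hx (by rw [hxb]; omega)

lemma update_mem_of_mem_lowVertices [DecidableEq ι] (h : IsOctahedral E)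
    (hα : ∀ k, 5 ≤ Fintype.card (α k)) {x : ∀ i, α i} (hx : x ∈ E) {i : ι} {b : α i}
    (hxi : x i ∈ lowVertices E i) (hb : b ∈ lowVertices E i) : update x i b ∈ E := by
  rw [mem_lowVertices] at hxi hb
  exact h.update_mem_of_degree_add_lt hα hx (by omega)

lemma three_le_card_lowVertices_or (h : IsOctahedral E) (hα : ∀ k, 5 ≤ Fintype.card (α k))
    (hE : #E ≤ 13) {i : ι} (hpos : ∀ v, 1 ≤ degree E i v) :
    3 ≤ #(lowVertices E i) ∨ #(lowVertices E i) = 2 ∧ ∀ v ∈ lowVertices E i, degree E i v = 2 := by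
  have hsum := sum_lowVertices_add_sum_compl E i
  have hcompl := card_add_card_compl (lowVertices E i)
  have hαi := hα i
  by_cases hone : ∃ a ∈ lowVertices E i, degree E i a = 1
  · obtain ⟨a, -, ha⟩ := hone
    have hhigh : ∀ v ∈ (lowVertices E i)ᶜ, 4 ≤ degree E i v := fun v hv ↦ by
      rw [mem_compl, mem_lowVertices] at hv
      have := h.le_degree_add_of_degree_lt hα (a := a) (b := v) (by omega)
      omega
    have hsum_low : #(lowVertices E i) • 1 ≤ ∑ v ∈ lowVertices E i, degree E i v :=
      card_nsmul_le_sum _ _ 1 fun v _ ↦ hpos v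
    have hsum_high : #(lowVertices E i)ᶜ • 4 ≤ ∑ v ∈ (lowVertices E i)ᶜ, degree E i v :=
      card_nsmul_le_sum _ _ 4 hhigh
    simp only [smul_eq_mul] at hsum_low hsum_high
    left
    omega
  · have htwo : ∀ v ∈ lowVertices E i, degree E i v = 2 := fun v hv ↦ by
      have hv_ne : degree E i v ≠ 1 := fun hv1 ↦ hone ⟨v, hv, hv1⟩
      have := hpos v
      rw [mem_lowVertices] at hv
      omega
    have hhigh : ∀ v ∈ (lowVertices E i)ᶜ, 3 ≤ degree E i v := fun v hv ↦ by
      rw [mem_compl, mem_lowVertices] at hv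
      omega
    have hsum_low : #(lowVertices E i) • 2 ≤ ∑ v ∈ lowVertices E i, degree E i v :=
      card_nsmul_le_sum _ _ 2 fun v hv ↦ (htwo v hv).ge
    have hsum_high : #(lowVertices E i)ᶜ • 3 ≤ ∑ v ∈ (lowVertices E i)ᶜ, degree E i v :=
      card_nsmul_le_sum _ _ 3 hhigh
    simp only [smul_eq_mul] at hsum_low hsum_high
    exact (le_or_gt 3 _).imp_right fun _ ↦ ⟨by omega, htwo⟩

lemma three_le_card_filter_mem_lowVertices (h : IsOctahedral E)
    (hα : ∀ k, 5 ≤ Fintype.card (α k)) (hE : #E ≤ 13) {i : ι} (hpos : ∀ v, 1 ≤ degree E i v) :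
    3 ≤ #{x ∈ E | x i ∈ lowVertices E i} := by
  rw [card_filter_mem_lowVertices]
  rcases h.three_le_card_lowVertices_or hα hE hpos with hcard | ⟨hcard, htwo⟩
  · exact hcard.trans (by simpa using card_nsmul_le_sum (lowVertices E i) _ 1 fun v _ ↦ hpos v)
  · rw [sum_congr rfl htwo, sum_const, hcard]
    norm_num

section LowPair

variable {i j : ι} {x : ∀ i, α i}

lemma card_lowVertices_le_two (h : IsOctahedral E) (hα : ∀ k, 5 ≤ Fintype.card (α k))
    (hij : i ≠ j) (hx : x ∈ E) (hxi : x i ∈ lowVertices E i) (hxj : x j ∈ lowVertices E j) :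
    #(lowVertices E i) ≤ 2 := by
  classical
  refine le_trans ?_ (mem_lowVertices.1 hxj)
  refine card_le_card_of_injOn (update x i) (fun b hb ↦ ?_) (update_injective x i).injOn
  exact mem_filter.2 ⟨h.update_mem_of_mem_lowVertices hα hx hxi hb, update_of_ne hij.symm _ _⟩

lemma card_lowVertices_eq_two (h : IsOctahedral E) (hα : ∀ k, 5 ≤ Fintype.card (α k))
    (hE : #E ≤ 13) (hpos : ∀ v, 1 ≤ degree E i v) (hij : i ≠ j) (hx : x ∈ E)
    (hxi : x i ∈ lowVertices E i) (hxj : x j ∈ lowVertices E j) :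
    #(lowVertices E i) = 2 ∧ ∀ v ∈ lowVertices E i, degree E i v = 2 :=
  (h.three_le_card_lowVertices_or hα hE hpos).resolve_left
    (Nat.not_le_of_lt (Nat.lt_succ_of_le (h.card_lowVertices_le_two hα hij hx hxi hxj)))

lemma filter_eq_image_update [DecidableEq ι] (h : IsOctahedral E)
    (hα : ∀ k, 5 ≤ Fintype.card (α k)) (hE : #E ≤ 13) (hpos : ∀ v, 1 ≤ degree E j v)
    (hij : i ≠ j) (hx : x ∈ E) (hxi : x i ∈ lowVertices E i) (hxj : x j ∈ lowVertices E j) :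
    ({z ∈ E | z i = x i} : Finset _) = (lowVertices E j).image (update x j) := by
  refine (eq_of_subset_of_card_le (fun z hz ↦ ?_) ?_).symm
  · obtain ⟨c, hc, rfl⟩ := mem_image.1 hz
    exact mem_filter.2 ⟨h.update_mem_of_mem_lowVertices hα hx hxj hc, update_of_ne hij _ _⟩
  · rw [card_image_of_injective _ (update_injective x j),
      (h.card_lowVertices_eq_two hα hE hpos hij.symm hx hxj hxi).1]
    exact mem_lowVertices.1 hxi

lemma mem_lowVertices_and_eq_of_mem (h : IsOctahedral E) (hα : ∀ k, 5 ≤ Fintype.card (α k))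
    (hE : #E ≤ 13) (hpos : ∀ v, 1 ≤ degree E j v) (hij : i ≠ j) (hx : x ∈ E)
    (hxi : x i ∈ lowVertices E i) (hxj : x j ∈ lowVertices E j) {y : ∀ i, α i} (hy : y ∈ E)
    (hyi : y i ∈ lowVertices E i) : y j ∈ lowVertices E j ∧ ∀ l ≠ i, l ≠ j → y l = x l := by
  classical
  have hmem : update y i (x i) ∈ ({z ∈ E | z i = x i} : Finset _) :=
    mem_filter.2 ⟨h.update_mem_of_mem_lowVertices hα hy hyi hxi, update_self ..⟩
  rw [h.filter_eq_image_update hα hE hpos hij hx hxi hxj] at hmem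
  obtain ⟨c, hc, hcy⟩ := mem_image.1 hmem
  constructor
  · rwa [show y j = c by simpa [hij.symm] using (congrFun hcy j).symm]
  · intro l hli hlj
    simpa [hli, hlj] using (congrFun hcy l).symm

-- Replacing `x i` by `y i` leaves `E`, so the at most five edges through `x i` or `y i` meet every
-- vertex of some colour. Two of these edges differ from each other at `j` only.
lemma injOn_eval_of_notMem_lowVertices (h : IsOctahedral E)
    (hα : ∀ k, 5 ≤ Fintype.card (α k)) (hE : #E ≤ 13) (hposi : ∀ v, 1 ≤ degree E i v)
    (hposj : ∀ v, 1 ≤ degree E j v) (hij : i ≠ j) (hx : x ∈ E)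
    (hxi : x i ∈ lowVertices E i) (hxj : x j ∈ lowVertices E j) {b : α i}
    (hb : b ∉ lowVertices E i) :
    Set.InjOn (fun z : ∀ i, α i ↦ z j) ({z ∈ E | z i = x i ∨ z i = b} : Finset _) := by
  classical
  obtain ⟨hcardi, htwo⟩ := h.card_lowVertices_eq_two hα hE hposi hij hx hxi hxj
  have hcardj := (h.card_lowVertices_eq_two hα hE hposj hij.symm hx hxj hxi).1
  have hupdate : update x i b ∉ E := fun hmem ↦ hb <| by
    simpa using (h.mem_lowVertices_and_eq_of_mem hα hE hposi hij.symm hx hxj hxi hmem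
      (by rwa [update_of_ne hij.symm])).1
  obtain ⟨k, -, hk⟩ := h.exists_image_eq_univ hx hupdate
  have hinj : Set.InjOn (fun z : ∀ i, α i ↦ z k) ({z ∈ E | z i = x i ∨ z i = b} : Finset _) := by
    refine injOn_of_card_image_eq (le_antisymm card_image_le ?_)
    calc #{z ∈ E | z i = x i ∨ z i = b} ≤ degree E i (x i) + degree E i b :=
          card_filter_eq_or_eq_le _ _
      _ ≤ 2 + 3 := add_le_add (mem_lowVertices.1 hxi)
          (degree_le_three_of_card_lowVertices_eq_two hα hE hcardi htwo b)
      _ ≤ Fintype.card (α k) := hα k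
      _ = #(image (· k) {z ∈ E | z i = x i ∨ z i = b}) := by rw [hk, card_univ]
  obtain ⟨d, hd, hdx⟩ := Finset.exists_mem_ne (s := lowVertices E j) (by omega) (x j)
  obtain rfl : k = j := by
    by_contra hkj
    refine hdx (update_eq_self_iff.1 (hinj ?_ ?_ (update_of_ne hkj d x)))
    · exact mem_filter.2 ⟨h.update_mem_of_mem_lowVertices hα hx hxj hd,
        .inl (update_of_ne hij d x)⟩
    · exact mem_filter.2 ⟨hx, .inl rfl⟩
  exact hinj

lemma eq_of_notMem_lowVertices (h : IsOctahedral E) (hα : ∀ k, 5 ≤ Fintype.card (α k))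
    (hE : #E ≤ 13) (hposi : ∀ v, 1 ≤ degree E i v) (hposj : ∀ v, 1 ≤ degree E j v) (hij : i ≠ j)
    (hx : x ∈ E) (hxi : x i ∈ lowVertices E i) (hxj : x j ∈ lowVertices E j) {y : ∀ i, α i}
    (hy : y ∈ E) (hyi : y i ∉ lowVertices E i) (hyj : y j ∉ lowVertices E j) {l : ι} (hli : l ≠ i)
    (hlj : l ≠ j) : y l = x l := by
  classical
  have hinj := h.injOn_eval_of_notMem_lowVertices hα hE hposi hposj hij hx hxi hxj hyi
  have hexists : ∀ k, ∃ c, x k ≠ c ∧ y k ≠ c := fun k ↦ by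
    obtain ⟨c, -, hc⟩ := exists_mem_notMem_of_card_lt_card (s := {x k, y k}) (t := univ)
      (by rw [card_univ]; exact card_le_two.trans_lt (by have := hα k; omega))
    rw [mem_insert, mem_singleton, not_or] at hc
    exact ⟨c, Ne.symm hc.1, Ne.symm hc.2⟩
  choose T hTx hTy using hexists
  obtain ⟨w, hw, hwx, hwz⟩ := h.exists_mem_ne (z := update (update T i (y i)) j (y j)) hx
    fun k ↦ by grind [update_apply]
  have hwi : w i = x i ∨ w i = y i := by simpa [hij] using hwz i
  have hwj : w j = x j ∨ w j = y j := by simpa using hwz j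
  have hwl : w l = x l ∨ w l = T l := by simpa [hli, hlj] using hwz l
  have hwP : w ∈ ({z ∈ E | z i = x i ∨ z i = y i} : Finset _) := mem_filter.2 ⟨hw, hwi⟩
  rcases hwj with hwj | hwj
  · exact absurd (hinj hwP (mem_filter.2 ⟨hx, .inl rfl⟩) hwj) hwx
  · obtain rfl : w = y := hinj hwP (mem_filter.2 ⟨hy, .inr rfl⟩) hwj
    exact hwl.resolve_right (hTy l)

lemma eq_of_lowVertices_pair (h : IsOctahedral E) (hα : ∀ k, 5 ≤ Fintype.card (α k))
    (hE : #E ≤ 13) (hposi : ∀ v, 1 ≤ degree E i v) (hposj : ∀ v, 1 ≤ degree E j v) (hij : i ≠ j)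
    (hx : x ∈ E) (hxi : x i ∈ lowVertices E i) (hxj : x j ∈ lowVertices E j) {y : ∀ i, α i}
    (hy : y ∈ E) {l : ι} (hli : l ≠ i) (hlj : l ≠ j) : y l = x l := by
  by_cases hyi : y i ∈ lowVertices E i
  · exact (h.mem_lowVertices_and_eq_of_mem hα hE hposj hij hx hxi hxj hy hyi).2 l hli hlj
  by_cases hyj : y j ∈ lowVertices E j
  · exact (h.mem_lowVertices_and_eq_of_mem hα hE hposi hij.symm hx hxj hxi hy hyj).2 l hlj hli
  · exact h.eq_of_notMem_lowVertices hα hE hposi hposj hij hx hxi hxj hy hyi hyj hli hlj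

end LowPair

theorem fourteen_le_card (h : IsOctahedral E) (hι : 5 ≤ Fintype.card ι)
    (hα : ∀ k, 5 ≤ Fintype.card (α k)) (hcover : ∀ i (v : α i), ∃ x ∈ E, x i = v) : 14 ≤ #E := by
  classical
  by_contra! hlt
  have hE : #E ≤ 13 := Nat.le_of_lt_succ hlt
  have hpos : ∀ i v, 1 ≤ degree E i v := fun i v ↦
    let ⟨x, hx, hxv⟩ := hcover i v
    card_pos.2 ⟨x, mem_filter.2 ⟨hx, hxv⟩⟩
  have hdisj : ∀ i j, i ≠ j → ∀ x ∈ E, x i ∈ lowVertices E i → x j ∉ lowVertices E j := by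
    intro i j hij x hx hxi hxj
    obtain ⟨l, hl⟩ := exists_mem_notMem_of_card_lt_card (s := {i, j}) (t := univ)
      (by rw [card_univ]; exact card_le_two.trans_lt (by omega))
    obtain ⟨hli, hlj⟩ : l ≠ i ∧ l ≠ j := by simpa using hl
    have : Nontrivial (α l) := Fintype.one_lt_card_iff_nontrivial.1 (by have := hα l; omega)
    obtain ⟨v, hv⟩ := exists_ne (x l)
    obtain ⟨y, hy, rfl⟩ := hcover l v
    exact hv (h.eq_of_lowVertices_pair hα hE (hpos i) (hpos j) hij hx hxi hxj hy hli hlj)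
  have hcount : 15 ≤ #E :=
    calc 15 ≤ ∑ _i : ι, 3 := by simp; omega
      _ ≤ ∑ i, #{x ∈ E | x i ∈ lowVertices E i} :=
        sum_le_sum fun i _ ↦ h.three_le_card_filter_mem_lowVertices hα hE (hpos i)
      _ = #(univ.biUnion fun i ↦ ({x ∈ E | x i ∈ lowVertices E i} : Finset _)) :=
        (card_biUnion fun i _ j _ hij ↦ disjoint_filter.2 (hdisj i j hij)).symm
      _ ≤ #E := card_le_card (biUnion_subset.2 fun _ _ ↦ filter_subset _ _)
  omega

end IsOctahedral

end Octahedral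

section Cone

variable {ι V : Type*} [AddCommGroup V] [Module ℝ V]

lemma mem_hull_image_iff [Fintype ι] {x : ι → V} {s : Set ι} {w : V} :
    w ∈ PointedCone.hull ℝ (x '' s) ↔
      ∃ c : ι → ℝ, 0 ≤ c ∧ (∀ i ∉ s, c i = 0) ∧ ∑ i, c i • x i = w := by
  constructor
  · intro hw
    obtain ⟨l, hl, rfl⟩ := (Finsupp.mem_span_image_iff_linearCombination _).1 hw
    refine ⟨fun i ↦ l i, fun i ↦ (l i).2, fun i hi ↦ ?_, ?_⟩
    · exact congrArg NNReal.toReal ((Finsupp.mem_supported' _ l).1 hl i hi)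
    · rw [Finsupp.linearCombination_apply, l.sum_fintype _ fun i ↦ zero_smul _ (x i)]
      rfl
  · rintro ⟨c, hc, hcs, rfl⟩
    refine sum_mem fun i _ ↦ ?_
    by_cases hi : i ∈ s
    · exact PointedCone.smul_mem _ (hc i) (PointedCone.subset_hull (Set.mem_image_of_mem x hi))
    · rw [hcs i hi, zero_smul]
      exact zero_mem _

lemma mem_hull_range_iff [Fintype ι] {x : ι → V} {w : V} :
    w ∈ PointedCone.hull ℝ (Set.range x) ↔ ∃ c : ι → ℝ, 0 ≤ c ∧ ∑ i, c i • x i = w := by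
  simp [← Set.image_univ, mem_hull_image_iff]

lemma exists_relation_of_not_linearIndepOn [Fintype ι] {x : ι → V} {t : Set ι}
    (ht : ¬ LinearIndepOn ℝ x t) :
    ∃ a : ι → ℝ, (∀ i ∉ t, a i = 0) ∧ ∑ i, a i • x i = 0 ∧ ∃ i, 0 < a i := by
  obtain ⟨f, hft, hfx, hf⟩ := linearDepOn_iff'.1 ht
  rw [Finsupp.linearCombination_apply, f.sum_fintype _ fun i ↦ zero_smul _ (x i)] at hfx
  have hzero := (Finsupp.mem_supported' _ f).1 hft
  obtain ⟨i, hi⟩ := Finsupp.ne_iff.1 hf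
  rcases lt_or_gt_of_ne hi with hneg | hpos
  · exact ⟨-f, fun j hj ↦ neg_eq_zero.2 (hzero j hj), by simp [hfx], i, neg_pos.2 hneg⟩
  · exact ⟨f, hzero, hfx, i, hpos⟩

-- Move the coefficients of `w` along a linear dependence until one of them vanishes.
lemma exists_mem_hull_image_diff_singleton [Finite ι] {x : ι → V} {t : Set ι} {w : V}
    (hw : w ∈ PointedCone.hull ℝ (x '' t)) (ht : ¬ LinearIndepOn ℝ x t) :
    ∃ i ∈ t, w ∈ PointedCone.hull ℝ (x '' (t \ {i})) := by
  have := Fintype.ofFinite ι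
  obtain ⟨c, hc, hct, rfl⟩ := mem_hull_image_iff.1 hw
  obtain ⟨a, hat, hax, p, hp⟩ := exists_relation_of_not_linearIndepOn ht
  obtain ⟨q, hq, hmin⟩ := exists_min_image ({i | 0 < a i} : Finset ι) (fun i ↦ c i / a i)
    ⟨p, by simpa using hp⟩
  simp only [mem_filter_univ] at hq hmin
  have hqt : q ∈ t := by
    by_contra hqt
    exact hq.ne' (hat q hqt)
  refine ⟨q, hqt, mem_hull_image_iff.2 ⟨fun i ↦ c i - c q / a q * a i, fun i ↦ ?_, ?_, ?_⟩⟩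
  · have hnonneg : 0 ≤ c q / a q := div_nonneg (hc q) hq.le
    have hci : 0 ≤ c i := hc i
    rcases lt_or_ge 0 (a i) with hi | hi
    · have := (le_div_iff₀ hi).1 (hmin i hi)
      simpa using this
    · have := mul_nonpos_of_nonneg_of_nonpos hnonneg hi
      simp only [Pi.zero_apply]
      linarith
  · intro i hi
    rw [Set.mem_sdiff, Set.mem_singleton_iff, not_and_not_right] at hi
    dsimp only
    by_cases hit : i ∈ t
    · rw [hi hit, div_mul_cancel₀ _ hq.ne', sub_self]
    · rw [hct i hit, hat i hit, mul_zero, sub_self]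
  · simp only [sub_smul, mul_smul, sum_sub_distrib, ← smul_sum, hax, smul_zero, sub_zero]

/-- Carathéodory's theorem for cones. -/
theorem exists_linearIndepOn_mem_hull_image [Finite ι] {x : ι → V} {s : Set ι} {w : V}
    (hw : w ∈ PointedCone.hull ℝ (x '' s)) :
    ∃ t ⊆ s, LinearIndepOn ℝ x t ∧ w ∈ PointedCone.hull ℝ (x '' t) := by
  have := Fintype.ofFinite ι
  obtain ⟨t, hts, ht⟩ := Finite.exists_le_minimal
    (p := fun t : Set ι ↦ w ∈ PointedCone.hull ℝ (x '' t)) hw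
  refine ⟨t, hts, ?_, ht.prop⟩
  by_contra hdep
  obtain ⟨i, hi, hwi⟩ := exists_mem_hull_image_diff_singleton ht.prop hdep
  exact (ht.le_of_le hwi Set.sdiff_subset hi).2 rfl

section Topology

variable [TopologicalSpace V] [IsTopologicalAddGroup V] [ContinuousSMul ℝ V] [T2Space V]

lemma isClosed_hull_range_of_linearIndependent [Finite ι] {x : ι → V}
    (hx : LinearIndependent ℝ x) : IsClosed (PointedCone.hull ℝ (Set.range x) : Set V) := by
  have := Fintype.ofFinite ι
  have hcone : (PointedCone.hull ℝ (Set.range x) : Set V) =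
      Fintype.linearCombination ℝ x '' Set.Ici 0 := by
    ext w
    exact mem_hull_range_iff
  have hemb := LinearMap.isClosedEmbedding_of_injective
    (LinearMap.ker_eq_bot.2 hx.fintypeLinearCombination_injective)
  rw [hcone]
  exact hemb.isClosedMap _ isClosed_Ici

theorem isClosed_hull_range [Finite ι] (x : ι → V) :
    IsClosed (PointedCone.hull ℝ (Set.range x) : Set V) := by
  have hcover : (PointedCone.hull ℝ (Set.range x) : Set V) =
      ⋃ t ∈ {t : Set ι | LinearIndepOn ℝ x t}, PointedCone.hull ℝ (x '' t) := by
    ext w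
    simp only [SetLike.mem_coe, Set.mem_ofPred_eq, Set.mem_iUnion, exists_prop]
    constructor
    · intro hw
      rw [← Set.image_univ] at hw
      obtain ⟨t, -, ht⟩ := exists_linearIndepOn_mem_hull_image hw
      exact ⟨t, ht⟩
    · rintro ⟨t, -, hwt⟩
      exact Submodule.span_mono (Set.image_subset_range x t) hwt
  rw [hcover]
  refine (Set.toFinite _).isClosed_biUnion fun t ht ↦ ?_
  rw [Set.image_eq_range]
  exact isClosed_hull_range_of_linearIndependent ht

end Topology

lemma map_mem_hull_image {V' : Type*} [AddCommGroup V'] [Module ℝ V'] (f : V →ₗ[ℝ] V') {s : Set V}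
    {w : V} (hw : w ∈ PointedCone.hull ℝ s) : f w ∈ PointedCone.hull ℝ (f '' s) := by
  have hmap : f w ∈ (PointedCone.hull ℝ s).map f := PointedCone.mem_map.2 ⟨w, hw, rfl⟩
  rwa [PointedCone.map, Submodule.map_span] at hmap

lemma map_nonpos_of_mem_hull {s : Set V} {f : V →ₗ[ℝ] ℝ} (hf : ∀ v ∈ s, f v ≤ 0) {w : V}
    (hw : w ∈ PointedCone.hull ℝ s) : f w ≤ 0 := by
  induction hw using Submodule.span_induction with
  | mem v hv => exact hf v hv
  | zero => rw [map_zero]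
  | add v w _ _ hv hw => rw [map_add]; exact add_nonpos hv hw
  | smul c v _ hv =>
    rw [show f (c • v) = (c : ℝ) * f v from map_smul f (c : ℝ) v]
    exact mul_nonpos_of_nonneg_of_nonpos c.2 hv

lemma mem_hull_image_of_map_eq_zero [Finite ι] {x : ι → V} {f : V →ₗ[ℝ] ℝ}
    (hf : ∀ i, f (x i) ≤ 0) {w : V} (hw : w ∈ PointedCone.hull ℝ (Set.range x)) (hfw : f w = 0) :
    w ∈ PointedCone.hull ℝ (x '' {i | f (x i) = 0}) := by
  have := Fintype.ofFinite ι
  obtain ⟨c, hc, rfl⟩ := mem_hull_range_iff.1 hw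
  simp only [map_sum, map_smul, smul_eq_mul] at hfw
  have hterm := (sum_eq_zero_iff_of_nonpos fun i _ ↦
    mul_nonpos_of_nonneg_of_nonpos (hc i) (hf i)).1 hfw
  exact mem_hull_image_iff.2
    ⟨c, hc, fun i hi ↦ (mul_eq_zero.1 (hterm i (mem_univ i))).resolve_right hi, rfl⟩

lemma exists_notMem_of_linearIndepOn [Fintype ι] [FiniteDimensional ℝ V]
    (hι : finrank ℝ V ≤ Fintype.card ι) {x : ι → V} {t : Set ι} (ht : LinearIndepOn ℝ x t)
    {f : V →ₗ[ℝ] ℝ} (hf : f ≠ 0) (hft : ∀ i ∈ t, f (x i) = 0) : ∃ i, i ∉ t := by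
  by_contra! hall
  rw [Set.eq_univ_of_forall hall, linearIndepOn_univ_iff] at ht
  have hspan := ht.span_eq_top_of_card_eq_finrank' (ht.fintype_card_le_finrank.antisymm hι)
  exact hf (LinearMap.ext_on_range hspan fun i ↦ hft i (hall i))

end Cone

section ColourfulCaratheodory

section InnerProduct

variable {W : Type*} [NormedAddCommGroup W] [InnerProductSpace ℝ W]

lemma inner_sub_eq_zero_and_nonpos_of_forall_dist_le {C : PointedCone ℝ W} {q z : W} (hz : z ∈ C)
    (hmin : ∀ y ∈ C, dist q z ≤ dist q y) :
    inner ℝ (q - z) z = 0 ∧ ∀ y ∈ C, inner ℝ (q - z) y ≤ 0 := by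
  have : Nonempty (C : Set W) := ⟨⟨z, hz⟩⟩
  have hdist : ‖q - z‖ = ⨅ y : (C : Set W), ‖q - y‖ :=
    le_antisymm (le_ciInf fun y ↦ by simpa only [dist_eq_norm] using hmin y y.2)
      (ciInf_le ⟨0, Set.forall_mem_range.2 fun _ ↦ norm_nonneg _⟩ (⟨z, hz⟩ : (C : Set W)))
  have hvar := (norm_eq_iInf_iff_real_inner_le_zero C.convex hz).1 hdist
  have hpolar : ∀ y ∈ C, inner ℝ (q - z) y ≤ 0 := fun y hy ↦ by
    simpa only [add_sub_cancel_right] using hvar (y + z) (C.add_mem hy hz)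
  refine ⟨(hpolar z hz).antisymm ?_, hpolar⟩
  simpa only [zero_sub, inner_neg_right, neg_nonpos] using hvar 0 C.zero_mem

lemma exists_inner_pos_of_mem_hull {s : Set W} {q z : W} (hqz : q ≠ z)
    (horth : inner ℝ (q - z) z = 0) (hq : q ∈ PointedCone.hull ℝ s) :
    ∃ v ∈ s, 0 < inner ℝ (q - z) v := by
  by_contra! hle
  have hself : inner ℝ (q - z) (q - z) ≤ 0 := by
    rw [inner_sub_right, horth, sub_zero]
    exact map_nonpos_of_mem_hull (f := innerₗ W (q - z)) hle hq
  exact hqz (sub_eq_zero.1 (inner_self_eq_zero.1 (hself.antisymm real_inner_self_nonneg)))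

variable {ι : Type*} [Fintype ι] [FiniteDimensional ℝ W]

-- The face of the cone containing `z` lies in the hyperplane `(q - z)ᗮ`, so `z` does not need all
-- the colours.
lemma exists_mem_hull_image_compl_singleton (hι : finrank ℝ W ≤ Fintype.card ι) {x : ι → W}
    {q z : W} (hqz : q ≠ z) (hz : z ∈ PointedCone.hull ℝ (Set.range x))
    (hmin : ∀ y ∈ PointedCone.hull ℝ (Set.range x), dist q z ≤ dist q y) :
    ∃ j, z ∈ PointedCone.hull ℝ (x '' {j}ᶜ) := by
  obtain ⟨horth, hpolar⟩ := inner_sub_eq_zero_and_nonpos_of_forall_dist_le hz hmin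
  have hne : innerₗ W (q - z) ≠ 0 := fun h ↦
    sub_ne_zero.2 hqz (inner_self_eq_zero.1 (LinearMap.congr_fun h (q - z)))
  obtain ⟨t, hts, ht, hzt⟩ := exists_linearIndepOn_mem_hull_image
    (mem_hull_image_of_map_eq_zero (f := innerₗ W (q - z))
      (fun i ↦ hpolar _ (PointedCone.subset_hull (Set.mem_range_self i))) hz horth)
  obtain ⟨j, hj⟩ := exists_notMem_of_linearIndepOn hι ht hne fun i hi ↦ hts hi
  exact ⟨j, Submodule.span_mono (Set.image_mono (Set.subset_compl_singleton_iff.2 hj)) hzt⟩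

/-- The conic form of Bárány's colourful Carathéodory theorem, in a Euclidean space. -/
theorem exists_mem_hull_range_of_forall_mem_hull_of_inner (hι : finrank ℝ W ≤ Fintype.card ι)
    {S : ι → Finset W} (hS : ∀ i, (S i).Nonempty) {q : W}
    (hq : ∀ i, q ∈ PointedCone.hull ℝ (S i : Set W)) :
    ∃ x : ι → W, (∀ i, x i ∈ S i) ∧ q ∈ PointedCone.hull ℝ (Set.range x) := by
  classical
  have := FiniteDimensional.proper_real W
  obtain ⟨x, hxS, hxmin⟩ := exists_min_image (Fintype.piFinset S)
    (fun x ↦ Metric.infDist q (PointedCone.hull ℝ (Set.range x) : Set W))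
    (Fintype.piFinset_nonempty.2 hS)
  simp only [Fintype.mem_piFinset] at hxS hxmin
  refine ⟨x, hxS, ?_⟩
  obtain ⟨z, hz, hdist⟩ := (isClosed_hull_range x).exists_infDist_eq_dist ⟨0, zero_mem _⟩ q
  have hnearest : ∀ x' : ι → W, (∀ i, x' i ∈ S i) →
      ∀ y ∈ PointedCone.hull ℝ (Set.range x'), dist q z ≤ dist q y := fun x' hx' y hy ↦
    hdist ▸ (hxmin x' hx').trans (Metric.infDist_le_dist_of_mem hy)
  by_contra hqx
  have hqz : q ≠ z := fun h ↦ hqx (h ▸ hz)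
  obtain ⟨horth, -⟩ := inner_sub_eq_zero_and_nonpos_of_forall_dist_le hz (hnearest x hxS)
  obtain ⟨j, hzj⟩ := exists_mem_hull_image_compl_singleton hι hqz hz (hnearest x hxS)
  obtain ⟨v, hvS, hv⟩ := exists_inner_pos_of_mem_hull hqz horth (hq j)
  have hx' : ∀ i, update x j v i ∈ S i := by
    intro i
    obtain rfl | hij := eq_or_ne i j
    · rwa [update_self]
    · rw [update_of_ne hij]
      exact hxS i
  have hzx' : z ∈ PointedCone.hull ℝ (Set.range (update x j v)) := by
    refine Submodule.span_mono ?_ hzj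
    rintro _ ⟨i, hi, rfl⟩
    exact ⟨i, update_of_ne hi v x⟩
  have hvx' : v ∈ PointedCone.hull ℝ (Set.range (update x j v)) :=
    PointedCone.subset_hull ⟨j, update_self j v x⟩
  exact hv.not_ge ((inner_sub_eq_zero_and_nonpos_of_forall_dist_le hzx'
    (hnearest _ hx')).2 v hvx')

end InnerProduct

variable {ι V : Type*} [Fintype ι] [AddCommGroup V] [Module ℝ V] [FiniteDimensional ℝ V]

/-- The conic form of Bárány's colourful Carathéodory theorem. -/
theorem exists_mem_hull_range_of_forall_mem_hull (hι : finrank ℝ V ≤ Fintype.card ι)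
    {S : ι → Finset V} (hS : ∀ i, (S i).Nonempty) {q : V}
    (hq : ∀ i, q ∈ PointedCone.hull ℝ (S i : Set V)) :
    ∃ x : ι → V, (∀ i, x i ∈ S i) ∧ q ∈ PointedCone.hull ℝ (Set.range x) := by
  classical
  let e : V ≃ₗ[ℝ] EuclideanSpace ℝ (Fin (finrank ℝ V)) := LinearEquiv.ofFinrankEq _ _ (by simp)
  obtain ⟨y, hyS, hy⟩ := exists_mem_hull_range_of_forall_mem_hull_of_inner
    (S := fun i ↦ (S i).image e) (q := e q) (by rwa [finrank_euclideanSpace_fin])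
    (fun i ↦ (hS i).image e) fun i ↦ by
      rw [coe_image]
      exact map_mem_hull_image e.toLinearMap (hq i)
  refine ⟨fun i ↦ e.symm (y i), fun i ↦ ?_, ?_⟩
  · obtain ⟨v, hv, hvy⟩ := mem_image.1 (hyS i)
    simpa only [← hvy, e.symm_apply_apply] using hv
  · simpa only [LinearEquiv.coe_coe, e.symm_apply_apply, ← Set.range_comp, comp_def] using
      map_mem_hull_image e.symm.toLinearMap hy

end ColourfulCaratheodory

section Line

variable {ι : Type*} [Fintype ι]

open scoped Classical in
/-- The coordinates that vanish at some point where the line `s ↦ c + s • a` meets the nonnegative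
orthant. When at most one coordinate vanishes at each point of the line, these correspond to the
endpoints of the segment or ray cut out by the orthant. -/
noncomputable def exitCoords (a c : ι → ℝ) : Finset ι :=
  {i | ∃ s : ℝ, (c + s • a) i = 0 ∧ 0 ≤ c + s • a}

variable {a c : ι → ℝ}

lemma mem_exitCoords {i : ι} :
    i ∈ exitCoords a c ↔ ∃ s : ℝ, (c + s • a) i = 0 ∧ 0 ≤ c + s • a := by
  simp only [exitCoords, mem_filter_univ]

lemma exitCoords_neg (a c : ι → ℝ) : exitCoords (-a) c = exitCoords a c := by
  ext i
  rw [mem_exitCoords, mem_exitCoords]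
  constructor <;> rintro ⟨s, hs⟩ <;>
    exact ⟨-s, by simpa only [smul_neg, neg_smul, neg_neg] using hs⟩

-- `p` maximises `-c i / a i` over the coordinates with `0 < a i`.
lemma exists_exitCoord_of_pos (hc : ∀ (s : ℝ) i j, (c + s • a) i = 0 → (c + s • a) j = 0 → i = j)
    (ha : ∃ i, 0 < a i) :
    ∃ p, 0 < a p ∧ (∀ i ∈ exitCoords a c, 0 < a i → i = p) ∧
      ((∃ s : ℝ, 0 ≤ c + s • a) → p ∈ exitCoords a c) := by
  obtain ⟨p, hp, hmax⟩ := exists_max_image ({i | 0 < a i} : Finset ι) (fun i ↦ -c i / a i)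
    (by simpa only [filter_nonempty_iff, mem_univ, true_and] using ha)
  simp only [mem_filter_univ] at hp hmax
  have hp0 : (c + (-c p / a p) • a) p = 0 := by
    rw [Pi.add_apply, Pi.smul_apply, smul_eq_mul, div_mul_cancel₀ _ hp.ne', add_neg_cancel]
  have hle : ∀ s : ℝ, 0 ≤ c + s • a → -c p / a p ≤ s := fun s hs ↦
    (div_le_iff₀ hp).2 (neg_le_iff_add_nonneg'.2 (hs p))
  refine ⟨p, hp, fun i hi hai ↦ ?_, fun ⟨s, hs⟩ ↦ mem_exitCoords.2 ⟨_, hp0, fun k ↦ ?_⟩⟩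
  · obtain ⟨s, hsi, hs⟩ := mem_exitCoords.1 hi
    have hs_eq : s = -c i / a i :=
      (eq_div_iff hai.ne').2 (eq_neg_of_add_eq_zero_right hsi)
    rw [hs_eq.trans ((hmax i hai).antisymm (hs_eq ▸ hle s hs))] at hsi
    exact hc _ i p hsi hp0
  · rcases lt_or_ge 0 (a k) with hk | hk
    · exact neg_le_iff_add_nonneg'.1 ((div_le_iff₀ hk).1 (hmax k hk))
    · exact (hs k).trans (add_le_add_right (mul_le_mul_of_nonpos_right (hle s hs) hk) (c k))

lemma card_exitCoords_eq_one [Nonempty ι]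
    (hc : ∀ (s : ℝ) i j, (c + s • a) i = 0 → (c + s • a) j = 0 → i = j) (ha : ∀ i, 0 < a i) :
    #(exitCoords a c) = 1 := by
  obtain ⟨p, -, huniq, hmem⟩ := exists_exitCoord_of_pos hc ⟨Classical.arbitrary ι, ha _⟩
  obtain ⟨s, hs⟩ := (Set.finite_range fun i ↦ -c i / a i).bddAbove
  have hfeas : 0 ≤ c + s • a := fun i ↦
    neg_le_iff_add_nonneg'.1 ((div_le_iff₀ (ha i)).1 (hs (Set.mem_range_self i)))
  exact card_eq_one.2 ⟨p, eq_singleton_iff_unique_mem.2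
    ⟨hmem ⟨s, hfeas⟩, fun i hi ↦ huniq i hi (ha i)⟩⟩

lemma even_card_exitCoords (hc : ∀ (s : ℝ) i j, (c + s • a) i = 0 → (c + s • a) j = 0 → i = j)
    (hpos : ∃ i, 0 < a i) (hneg : ∃ i, a i < 0) : Even #(exitCoords a c) := by
  classical
  obtain ⟨p, hp, hp_uniq, hp_mem⟩ := exists_exitCoord_of_pos hc hpos
  obtain ⟨n, hn, hn_uniq, hn_mem⟩ := exists_exitCoord_of_pos (a := -a) (c := c)
    (fun s i j ↦ by simpa only [smul_neg, neg_smul] using hc (-s) i j)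
    (hneg.imp fun i hi ↦ neg_pos.2 hi)
  rw [exitCoords_neg] at hn_uniq hn_mem
  obtain hempty | ⟨i, hi⟩ := (exitCoords a c).eq_empty_or_nonempty
  · rw [hempty, card_empty]
    exact Even.zero
  obtain ⟨s, -, hs⟩ := mem_exitCoords.1 hi
  have hpair : exitCoords a c = {p, n} := by
    refine Subset.antisymm (fun k hk ↦ ?_) (insert_subset (hp_mem ⟨s, hs⟩)
      (singleton_subset_iff.2 (hn_mem ⟨-s, by rwa [neg_smul_neg]⟩)))
    rw [mem_insert, mem_singleton]
    rcases lt_trichotomy (a k) 0 with hk' | hk' | hk'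
    · exact .inr (hn_uniq k hk (neg_pos.2 hk'))
    · obtain ⟨t, htk, -⟩ := mem_exitCoords.1 hk
      refine .inl (hc (-c p / a p) k p ?_ ?_)
      · simpa [hk'] using htk
      · simp [hp.ne']
    · exact .inl (hp_uniq k hk hk')
  have hpn : p ≠ n := by
    rintro rfl
    exact lt_asymm hp (neg_pos.1 hn)
  rw [hpair, card_pair hpn]
  exact even_two

end Line

section FacetParity

variable {ι V : Type*} [AddCommGroup V] [Module ℝ V] {x : ι → V} {w : V}

lemma exists_relation_of_zero_mem_convexHull_image [Fintype ι] {s : Set ι}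
    (h : (0 : V) ∈ convexHull ℝ (x '' s)) :
    ∃ b : ι → ℝ, 0 ≤ b ∧ b ≠ 0 ∧ (∀ i ∉ s, b i = 0) ∧ ∑ i, b i • x i = 0 := by
  classical
  obtain ⟨κ, _, u, z, hu, hu1, hz, hzu⟩ := mem_convexHull_iff_exists_fintype.1 h
  choose f hfs hfz using hz
  refine ⟨fun i ↦ ∑ k with f k = i, u k, fun i ↦ sum_nonneg fun k _ ↦ hu k, fun hzero ↦ ?_,
    fun i hi ↦ sum_eq_zero fun k hk ↦ absurd (hfs k) ((mem_filter.1 hk).2 ▸ hi), ?_⟩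
  · have hsum : ∑ i, ∑ k with f k = i, u k = 0 := sum_eq_zero fun i _ ↦ congrFun hzero i
    rw [sum_fiberwise univ f u, hu1] at hsum
    exact one_ne_zero hsum
  · rw [← hzu, ← sum_fiberwise univ f fun k ↦ u k • z k]
    refine sum_congr rfl fun i _ ↦ ?_
    rw [sum_smul]
    refine sum_congr rfl fun k hk ↦ ?_
    rw [← hfz k, (mem_filter.1 hk).2]

lemma zero_mem_convexHull_image_iff [Fintype ι] {s : Set ι} :
    (0 : V) ∈ convexHull ℝ (x '' s) ↔
      ∃ b : ι → ℝ, 0 ≤ b ∧ b ≠ 0 ∧ (∀ i ∉ s, b i = 0) ∧ ∑ i, b i • x i = 0 := by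
  refine ⟨exists_relation_of_zero_mem_convexHull_image, ?_⟩
  rintro ⟨b, hb, hb0, hbs, hbx⟩
  have hpos : 0 < ∑ i, b i := Fintype.sum_pos (lt_of_le_of_ne hb hb0.symm)
  have hmass : (univ.filter (b · ≠ 0)).centerMass b x ∈ convexHull ℝ (x '' s) := by
    refine centerMass_mem_convexHull _ (fun i _ ↦ hb i) ?_ fun i hi ↦ ?_
    · rwa [sum_filter_ne_zero]
    · exact Set.mem_image_of_mem x (not_not.1 fun his ↦ (mem_filter.1 hi).2 (hbs i his))
  rwa [centerMass_filter_ne_zero, centerMass, hbx, smul_zero] at hmass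

lemma zero_mem_convexHull_range_iff [Fintype ι] :
    (0 : V) ∈ convexHull ℝ (Set.range x) ↔ ∃ b : ι → ℝ, 0 ≤ b ∧ b ≠ 0 ∧ ∑ i, b i • x i = 0 := by
  simp [← Set.image_univ, zero_mem_convexHull_image_iff]

lemma pos_of_sum_smul_eq_zero [Fintype ι] (hx : ∀ i, (0 : V) ∉ convexHull ℝ (x '' {i}ᶜ))
    {b : ι → ℝ} (hb : 0 ≤ b) (hb0 : b ≠ 0) (hbx : ∑ i, b i • x i = 0) (i : ι) : 0 < b i := by
  refine (hb i).lt_of_ne' fun hi ↦ hx i (zero_mem_convexHull_image_iff.2 ⟨b, hb, hb0, ?_, hbx⟩)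
  intro j hj
  rwa [Set.notMem_compl_iff.1 hj]

lemma eq_of_sum_smul_eq_of_eq_zero [Fintype ι]
    (hw : ∀ i j, i ≠ j → w ∉ Submodule.span ℝ (x '' {i, j}ᶜ)) {c : ι → ℝ} (hc : ∑ k, c k • x k = w)
    {i j : ι} (hi : c i = 0) (hj : c j = 0) : i = j := by
  by_contra hij
  refine hw i j hij (hc ▸ sum_mem fun k _ ↦ ?_)
  by_cases hk : k ∈ ({i, j} : Set ι)
  · rcases hk with rfl | rfl
    · rw [hi, zero_smul]
      exact zero_mem _
    · rw [hj, zero_smul]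
      exact zero_mem _
  · exact Submodule.smul_mem _ _ (Submodule.subset_span (Set.mem_image_of_mem x hk))

-- Otherwise two coordinates of a representation of `w` could be cancelled.
lemma exists_eq_smul_of_sum_smul_eq_zero [Fintype ι]
    (hw : ∀ i j, i ≠ j → w ∉ Submodule.span ℝ (x '' {i, j}ᶜ)) {a b c : ι → ℝ}
    (hc : ∑ k, c k • x k = w) (ha : ∑ k, a k • x k = 0) (ha0 : a ≠ 0)
    (hb : ∑ k, b k • x k = 0) : ∃ s : ℝ, b = s • a := by
  obtain ⟨i, hi⟩ : ∃ i, a i ≠ 0 := ne_iff.1 ha0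
  refine ⟨b i / a i, sub_eq_zero.1 ?_⟩
  set d := b - (b i / a i) • a with hd
  have hdx : ∑ k, d k • x k = 0 := by
    simp [hd, sub_smul, mul_smul, sum_sub_distrib, ← smul_sum, ha, hb]
  have hdi : d i = 0 := by simp [hd, hi]
  by_contra hd0
  obtain ⟨j, hj⟩ : ∃ j, d j ≠ 0 := ne_iff.1 hd0
  set c' := c - (c i / a i) • a with hc'
  have hij : i = j := by
    refine eq_of_sum_smul_eq_of_eq_zero hw (c := c' - (c' j / d j) • d) ?_ ?_ ?_
    · simp [hc', sub_smul, mul_smul, sum_sub_distrib, ← smul_sum, ha, hdx, hc]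
    · simp [hc', hdi, hi]
    · simp [hj]
  exact hj (hij ▸ hdi)

lemma mem_hull_image_compl_singleton_iff [Fintype ι]
    (hw : ∀ i j, i ≠ j → w ∉ Submodule.span ℝ (x '' {i, j}ᶜ)) {a c : ι → ℝ}
    (hc : ∑ k, c k • x k = w) (ha : ∑ k, a k • x k = 0) (ha0 : a ≠ 0) {i : ι} :
    w ∈ PointedCone.hull ℝ (x '' {i}ᶜ) ↔ i ∈ exitCoords a c := by
  rw [mem_hull_image_iff, mem_exitCoords]
  constructor
  · rintro ⟨c', hc', hc'i, hc'w⟩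
    obtain ⟨s, hs⟩ := exists_eq_smul_of_sum_smul_eq_zero hw hc ha ha0 (b := c' - c)
      (by simp [sub_smul, hc'w, hc])
    rw [sub_eq_iff_eq_add'] at hs
    exact ⟨s, hs ▸ hc'i i (by simp), hs ▸ hc'⟩
  · rintro ⟨s, hsi, hs⟩
    refine ⟨c + s • a, hs, fun k hk ↦ ?_, ?_⟩
    · rwa [Set.notMem_compl_iff.1 hk]
    · simp [add_smul, mul_smul, sum_add_distrib, ← smul_sum, ha, hc]

variable [Fintype ι] [FiniteDimensional ℝ V]

lemma span_range_eq_top_of_zero_mem_convexHull (hι : Fintype.card ι = finrank ℝ V + 1)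
    (hx : ∀ i, (0 : V) ∉ convexHull ℝ (x '' {i}ᶜ))
    (h0 : (0 : V) ∈ convexHull ℝ (Set.range x)) : Submodule.span ℝ (Set.range x) = ⊤ := by
  classical
  obtain ⟨b, hb, hb0, hbx⟩ := zero_mem_convexHull_range_iff.1 h0
  have hpos := pos_of_sum_smul_eq_zero hx hb hb0 hbx
  obtain ⟨i⟩ : Nonempty ι := Fintype.card_pos_iff.1 (by omega)
  have hi : -(b i • x i) ∈ PointedCone.hull ℝ (x '' {i}ᶜ) := by
    rw [Fintype.sum_eq_add_sum_compl i, add_eq_zero_iff_neg_eq] at hbx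
    rw [hbx]
    refine sum_mem fun j hj ↦ PointedCone.smul_mem _ (hb j) (PointedCone.subset_hull ?_)
    exact Set.mem_image_of_mem x (by simpa using hj)
  obtain ⟨t, hti, ht, hwt⟩ := exists_linearIndepOn_mem_hull_image hi
  obtain ⟨c, hc, hct, hcx⟩ := mem_hull_image_iff.1 hwt
  have ht_eq : t = {i}ᶜ := by
    refine hti.antisymm fun j hj ↦ by_contra fun hjt ↦ ?_
    have hd := pos_of_sum_smul_eq_zero hx (b := c + Pi.single i (b i))
      (add_nonneg hc (Pi.single_nonneg.2 (hb i))) (fun h ↦ ?_) ?_ j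
    · simp [hct j hjt, Set.mem_compl_singleton_iff.1 hj] at hd
    · exact (add_pos_of_nonneg_of_pos (hc i) (hpos i)).ne' (by simpa using congrFun h i)
    · simp [add_smul, sum_add_distrib, hcx, Pi.single_apply]
  have hspan := ht.linearIndependent.span_eq_top_of_card_eq_finrank' ?_
  · refine top_unique (hspan.symm.trans_le (Submodule.span_mono ?_))
    rintro _ ⟨j, rfl⟩
    exact Set.mem_range_self _
  · rw [ht_eq, Fintype.card_compl_set, Set.card_singleton, hι, Nat.add_sub_cancel]

-- The representations `c + s • a` of `w` form a line, and the cones of the facets containing `w`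
-- correspond to the exits of this line from the orthant. It has one exit if `a` is positive, that
-- is, if `0` is in the simplex, and zero or two otherwise.
lemma zero_mem_convexHull_iff_odd_of_mem_span (hι : Fintype.card ι = finrank ℝ V + 1)
    (hx : ∀ i, (0 : V) ∉ convexHull ℝ (x '' {i}ᶜ))
    (hw : ∀ i j, i ≠ j → w ∉ Submodule.span ℝ (x '' {i, j}ᶜ))
    (hspan : w ∈ Submodule.span ℝ (Set.range x))
    [DecidablePred fun i ↦ w ∈ PointedCone.hull ℝ (x '' {i}ᶜ)] :
    (0 : V) ∈ convexHull ℝ (Set.range x) ↔ Odd #{i | w ∈ PointedCone.hull ℝ (x '' {i}ᶜ)} := by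
  obtain ⟨c, hc⟩ := (Submodule.mem_span_range_iff_exists_fun ℝ).1 hspan
  have hdep : ¬ LinearIndepOn ℝ x Set.univ := fun h ↦
    (linearIndepOn_univ_iff.1 h).fintype_card_le_finrank.not_gt (by omega)
  obtain ⟨a, -, ha, p, hp⟩ := exists_relation_of_not_linearIndepOn hdep
  have ha0 : a ≠ 0 := ne_iff.2 ⟨p, hp.ne'⟩
  have hfacets : ({i | w ∈ PointedCone.hull ℝ (x '' {i}ᶜ)} : Finset ι) = exitCoords a c := by
    ext i
    rw [mem_filter_univ, mem_hull_image_compl_singleton_iff hw hc ha ha0]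
  have hline (s : ℝ) (i j : ι) : (c + s • a) i = 0 → (c + s • a) j = 0 → i = j :=
    eq_of_sum_smul_eq_of_eq_zero hw <| by
      simp [add_smul, mul_smul, sum_add_distrib, ← smul_sum, ha, hc]
  rw [hfacets]
  by_cases hneg : ∃ n, a n < 0
  · refine iff_of_false (fun h0 ↦ ?_)
      (Nat.not_odd_iff_even.2 (even_card_exitCoords hline ⟨p, hp⟩ hneg))
    obtain ⟨n, hn⟩ := hneg
    obtain ⟨b, hb, hb0, hbx⟩ := zero_mem_convexHull_range_iff.1 h0
    obtain ⟨s, rfl⟩ := exists_eq_smul_of_sum_smul_eq_zero hw hc ha ha0 hbx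
    have hpos := pos_of_sum_smul_eq_zero hx hb hb0 hbx
    exact (neg_of_mul_pos_left (hpos n) hn.le).not_gt (pos_of_mul_pos_left (hpos p) hp.le)
  · have ha_nonneg : 0 ≤ a := fun i ↦ not_lt.1 fun hi ↦ hneg ⟨i, hi⟩
    have : Nonempty ι := ⟨p⟩
    rw [card_exitCoords_eq_one hline (pos_of_sum_smul_eq_zero hx ha_nonneg ha0 ha)]
    exact iff_of_true (zero_mem_convexHull_range_iff.2 ⟨a, ha_nonneg, ha0, ha⟩) odd_one

theorem zero_mem_convexHull_range_iff_odd (hι : Fintype.card ι = finrank ℝ V + 1)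
    (hx : ∀ i, (0 : V) ∉ convexHull ℝ (x '' {i}ᶜ))
    (hw : ∀ i j, i ≠ j → w ∉ Submodule.span ℝ (x '' {i, j}ᶜ))
    [DecidablePred fun i ↦ w ∈ PointedCone.hull ℝ (x '' {i}ᶜ)] :
    (0 : V) ∈ convexHull ℝ (Set.range x) ↔ Odd #{i | w ∈ PointedCone.hull ℝ (x '' {i}ᶜ)} := by
  by_cases hspan : w ∈ Submodule.span ℝ (Set.range x)
  · exact zero_mem_convexHull_iff_odd_of_mem_span hι hx hw hspan
  refine iff_of_false (fun h0 ↦ ?_) ?_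
  · exact hspan (span_range_eq_top_of_zero_mem_convexHull hι hx h0 ▸ Submodule.mem_top)
  · rw [filter_false_of_mem fun i _ hi ↦ hspan ?_, card_empty]
    · exact Nat.not_odd_zero
    · exact Submodule.span_mono (Set.image_subset_range x _) (PointedCone.hull_le_span ℝ _ hi)

end FacetParity

section Parity

variable {ι : Type*} {α : ι → Type*}

lemma even_card_of_update_mem [DecidableEq ι] {T : Finset (∀ i, α i)} {i : ι} {a b : α i}
    (hab : a ≠ b) (hT : ∀ x ∈ T, x i = a ∨ x i = b)
    (hupdate : ∀ x ∈ T, update x i a ∈ T ∧ update x i b ∈ T) : Even #T := by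
  classical
  have hdegree : degree T i a = degree T i b :=
    (degree_le_degree_of_update_mem fun x hx _ ↦ (hupdate x hx).2).antisymm
      (degree_le_degree_of_update_mem fun x hx _ ↦ (hupdate x hx).1)
  have hcard : #T = degree T i a + degree T i b := by
    rw [degree, degree, ← card_union_of_disjoint, ← filter_or, filter_true_of_mem hT]
    exact disjoint_filter.2 fun x _ hxa hxb ↦ hab (hxa.symm.trans hxb)
  exact ⟨degree T i a, by rw [hcard, hdegree]⟩

theorem isOctahedral_of_mem_iff_odd [Fintype ι] [∀ i, DecidableEq (α i)] {E : Finset (∀ i, α i)}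
    {F : ι → (∀ i, α i) → Prop} [∀ x, DecidablePred (F · x)]
    (hF : ∀ i x y, (∀ k ≠ i, x k = y k) → F i x → F i y)
    (hE : ∀ x, x ∈ E ↔ Odd #{i | F i x}) : IsOctahedral E := by
  classical
  intro y z hyz
  set B := Fintype.piFinset fun i ↦ ({y i, z i} : Finset (α i)) with hB
  have hmem (x : ∀ i, α i) : x ∈ B ↔ ∀ i, x i = y i ∨ x i = z i := by
    simp only [hB, Fintype.mem_piFinset, mem_insert, mem_singleton]
  have hEB : {x ∈ E | ∀ i, x i = y i ∨ x i = z i} = {x ∈ B | Odd #{i | F i x}} := by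
    ext x
    rw [mem_filter, mem_filter, hE, hmem, and_comm]
  have hswap : ∑ x ∈ B, #{i | F i x} = ∑ i, #{x ∈ B | F i x} :=
    sum_card_bipartiteAbove_eq_sum_card_bipartiteBelow fun x i ↦ F i x
  rw [hEB, ← even_sum_iff_even_card_odd, hswap]
  refine even_sum _ fun i _ ↦ even_card_of_update_mem (hyz i) (fun x hx ↦ ?_) fun x hx ↦ ?_
  · exact (hmem x).1 (mem_filter.1 hx).1 i
  · obtain ⟨hxB, hxF⟩ := mem_filter.1 hx
    have hupdate (v : α i) (hv : v = y i ∨ v = z i) :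
        update x i v ∈ ({x ∈ B | F i x} : Finset _) := by
      refine mem_filter.2 ⟨(hmem _).2 fun k ↦ ?_, hF i x _ (fun k hk ↦ ?_) hxF⟩
      · obtain rfl | hk := eq_or_ne k i
        · rwa [update_self]
        · rw [update_of_ne hk]
          exact (hmem x).1 hxB k
      · rw [update_of_ne hk]
    exact ⟨hupdate _ (.inl rfl), hupdate _ (.inr rfl)⟩

end Parity

section GeneralPosition

variable {ι V : Type*} [AddCommGroup V] [Module ℝ V]

lemma exists_notMem_span_of_card_lt_finrank {P : Set V} (hP : P.Finite) :
    ∃ w : V, ∀ s : Finset V, (s : Set V) ⊆ P → #s < finrank ℝ V →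
      w ∉ Submodule.span ℝ (s : Set V) := by
  classical
  let U := ({s ∈ hP.toFinset.powerset | #s < finrank ℝ V}).image
    fun s : Finset V ↦ Submodule.span ℝ (s : Set V)
  have hU : ⊤ ∉ U := fun htop ↦ by
    obtain ⟨s, hs, hspan⟩ := mem_image.1 htop
    have hfinrank : finrank ℝ (Submodule.span ℝ (s : Set V)) ≤ #s := finrank_span_finset_le_card s
    rw [hspan, finrank_top] at hfinrank
    exact hfinrank.not_gt (mem_filter.1 hs).2
  obtain ⟨w, hw⟩ := (Set.ne_univ_iff_exists_notMem _).1 (Subspace.biUnion_ne_univ_of_top_notMem hU)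
  refine ⟨w, fun s hs hcard hws ↦ hw (Set.mem_biUnion ?_ hws)⟩
  exact mem_image_of_mem _
    (mem_filter.2 ⟨mem_powerset.2 (hP.subset_toFinset.2 hs), hcard⟩)

/-- General position with respect to the origin: every `finrank ℝ V` points of `P` are linearly
independent. Smaller subsets are included so that the notion is not vacuous for small `P`. -/
def LinearGeneralPosition (P : Set V) : Prop :=
  ∀ s : Finset V, (s : Set V) ⊆ P → #s ≤ finrank ℝ V → LinearIndepOn ℝ id (s : Set V)

lemma LinearGeneralPosition.zero_notMem_convexHull {P : Set V} (hP : LinearGeneralPosition P)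
    {s : Finset V} (hs : (s : Set V) ⊆ P) (hcard : #s ≤ finrank ℝ V) :
    (0 : V) ∉ convexHull ℝ (s : Set V) := by
  rw [mem_convexHull']
  rintro ⟨b, -, hb1, hbs⟩
  have hzero := linearIndepOn_finset_iff.1 (hP s hs hcard) b hbs
  rw [sum_eq_zero hzero] at hb1
  exact zero_ne_one hb1

open scoped Classical in
/-- The colourful simplices containing the origin, as tuples of vertices. -/
noncomputable def colourfulSimplices [Fintype ι] (S : ι → Finset V) : Finset (∀ i, S i) :=
  {x | (0 : V) ∈ convexHull ℝ (Set.range fun i ↦ (x i : V))}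

lemma mem_colourfulSimplices [Fintype ι] {S : ι → Finset V} {x : ∀ i, S i} :
    x ∈ colourfulSimplices S ↔ (0 : V) ∈ convexHull ℝ (Set.range fun i ↦ (x i : V)) := by
  simp only [colourfulSimplices, mem_filter_univ]

lemma ncard_setOf_zero_mem_convexHull_range [Fintype ι] (S : ι → Finset V) :
    Set.ncard {x : ι → V | (∀ i, x i ∈ S i) ∧ (0 : V) ∈ convexHull ℝ (Set.range x)} =
      #(colourfulSimplices S) := by
  have himage : {x : ι → V | (∀ i, x i ∈ S i) ∧ (0 : V) ∈ convexHull ℝ (Set.range x)} =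
      (fun (x : ∀ i, S i) i ↦ (x i : V)) '' colourfulSimplices S := by
    ext x
    constructor
    · rintro ⟨hxS, hx⟩
      exact ⟨fun i ↦ ⟨x i, hxS i⟩, mem_colourfulSimplices.2 hx, rfl⟩
    · rintro ⟨y, hy, rfl⟩
      exact ⟨fun i ↦ (y i).2, mem_colourfulSimplices.1 hy⟩
  have hinj : Injective fun (x : ∀ i, S i) i ↦ (x i : V) := fun x y hxy ↦
    funext fun i ↦ Subtype.ext (congrFun hxy i)
  rw [himage, Set.ncard_image_of_injective _ hinj, Set.ncard_coe_finset]

theorem isOctahedral_colourfulSimplices [Fintype ι] [FiniteDimensional ℝ V] [DecidableEq V]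
    (hι : Fintype.card ι = finrank ℝ V + 1) {S : ι → Finset V}
    (hS : LinearGeneralPosition (⋃ i, (S i : Set V))) : IsOctahedral (colourfulSimplices S) := by
  classical
  obtain ⟨w, hw⟩ := exists_notMem_span_of_card_lt_finrank
    (Set.finite_iUnion fun i ↦ (S i).finite_toSet)
  have hsub (x : ∀ i, S i) (t : Finset ι) :
      (t.image (fun i ↦ (x i : V)) : Set V) ⊆ ⋃ i, (S i : Set V) := by
    rw [coe_image]
    exact Set.image_subset_iff.2 fun i _ ↦ Set.mem_iUnion_of_mem i (x i).2
  refine isOctahedral_of_mem_iff_odd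
    (F := fun i x ↦ w ∈ PointedCone.hull ℝ ((fun k ↦ (x k : V)) '' {i}ᶜ)) ?_ fun x ↦ ?_
  · intro i x y hxy hx
    have himage : (fun k ↦ (x k : V)) '' {i}ᶜ = (fun k ↦ (y k : V)) '' {i}ᶜ :=
      Set.image_congr fun k hk ↦ congrArg Subtype.val (hxy k hk)
    rwa [← himage]
  · rw [mem_colourfulSimplices]
    refine zero_mem_convexHull_range_iff_odd hι (fun i ↦ ?_) fun i j hij ↦ ?_
    · have hcard : #(({i}ᶜ : Finset ι).image fun k ↦ (x k : V)) ≤ finrank ℝ V :=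
        card_image_le.trans_eq (by rw [card_compl, card_singleton, hι, Nat.add_sub_cancel])
      simpa only [coe_image, coe_compl, coe_singleton] using
        hS.zero_notMem_convexHull (hsub x {i}ᶜ) hcard
    · have hcard : #(({i, j}ᶜ : Finset ι).image fun k ↦ (x k : V)) < finrank ℝ V := by
        have hpair := card_add_card_compl ({i, j} : Finset ι)
        rw [card_pair hij] at hpair
        exact card_image_le.trans_lt (by omega)
      simpa only [coe_image, coe_compl, coe_insert, coe_singleton] using
        hw _ (hsub x {i, j}ᶜ) hcard

theorem linearGeneralPosition_of_affineIndependent {P : Finset V} (hP : finrank ℝ V ≤ #P)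
    (h0 : (0 : V) ∉ P) (hindep : ∀ s : Finset V, (s : Set V) ⊆ P ∪ {0} → #s = finrank ℝ V + 1 →
      AffineIndependent ℝ (fun p : s ↦ (p : V))) : LinearGeneralPosition (P : Set V) := by
  classical
  intro s hs hcard
  obtain ⟨t, hst, htP, ht⟩ := exists_subsuperset_card_eq (coe_subset.1 hs) hcard hP
  have h0t : 0 ∉ t := fun h ↦ h0 (htP h)
  have hinsert : ({0} : Set V) ∪ (fun v ↦ v +ᵥ (0 : V)) '' (t : Set V) =
      ((insert 0 t : Finset V) : Set V) := by simp
  have hlin : LinearIndepOn ℝ id (t : Set V) := by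
    refine (linearIndependent_set_iff_affineIndependent_vadd_union_singleton ℝ
      (fun v hv hv0 ↦ h0t (hv0 ▸ hv)) (0 : V)).2 ?_
    rw [hinsert]
    refine hindep (insert 0 t) ?_ (by rw [card_insert_of_notMem h0t, ht])
    rw [coe_insert, Set.union_singleton]
    exact Set.insert_subset_insert htP
  exact hlin.mono hst

end GeneralPosition

section Covering

variable {ι V : Type*} [AddCommGroup V] [Module ℝ V] [TopologicalSpace V]

lemma hull_eq_top_of_zero_mem_interior_convexHull [ContinuousSMul ℝ V] {s : Set V}
    (hs : (0 : V) ∈ interior (convexHull ℝ s)) : PointedCone.hull ℝ s = ⊤ := by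
  refine eq_top_iff.2 fun u _ ↦ ?_
  have hcone : convexHull ℝ s ⊆ PointedCone.hull ℝ s :=
    convexHull_min PointedCone.subset_hull (PointedCone.convex _)
  have hsmall : ∀ᶠ t : ℝ in nhdsWithin 0 (Set.Ioi 0), t • u ∈ convexHull ℝ s := by
    have htendsto : Filter.Tendsto (fun t : ℝ ↦ t • u) (nhds 0) (nhds 0) :=
      Continuous.tendsto' (by fun_prop) 0 0 (zero_smul ℝ u)
    exact (htendsto.eventually (mem_interior_iff_mem_nhds.1 hs)).filter_mono nhdsWithin_le_nhds
  obtain ⟨t, htu, ht⟩ := (hsmall.and self_mem_nhdsWithin).exists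
  rw [← inv_smul_smul₀ (ne_of_gt ht) u]
  exact PointedCone.smul_mem _ (inv_nonneg.2 (le_of_lt ht)) (hcone htu)

theorem exists_mem_colourfulSimplices [Fintype ι] [FiniteDimensional ℝ V] [ContinuousSMul ℝ V]
    (hι : Fintype.card ι = finrank ℝ V + 1) {S : ι → Finset V}
    (hS : ∀ i, (0 : V) ∈ interior (convexHull ℝ (S i : Set V))) (i : ι) (v : S i) :
    ∃ x ∈ colourfulSimplices S, x i = v := by
  classical
  have hcard : finrank ℝ V ≤ Fintype.card {k // k ≠ i} := by
    rw [Fintype.card_subtype_compl, Fintype.card_subtype_eq, hι, Nat.add_sub_cancel]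
  have hne (k : ι) : (S k).Nonempty :=
    coe_nonempty.1 (convexHull_nonempty_iff.1 ⟨0, interior_subset (hS k)⟩)
  obtain ⟨y, hyS, hy⟩ := exists_mem_hull_range_of_forall_mem_hull hcard (q := -(v : V))
    (fun k ↦ hne k) fun k ↦ by
      rw [hull_eq_top_of_zero_mem_interior_convexHull (hS k)]
      exact Submodule.mem_top
  obtain ⟨c, hc, hcy⟩ := mem_hull_range_iff.1 hy
  refine ⟨fun k ↦ if h : k = i then h ▸ v else ⟨y ⟨k, h⟩, hyS _⟩, ?_, by simp⟩
  rw [mem_colourfulSimplices, zero_mem_convexHull_range_iff]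
  refine ⟨fun k ↦ if h : k = i then 1 else c ⟨k, h⟩, fun k ↦ ?_, ne_iff.2 ⟨i, by simp⟩, ?_⟩
  · by_cases h : k = i
    · simp [h]
    · simpa [h] using hc ⟨k, h⟩
  · rw [Fintype.sum_eq_add_sum_subtype_ne _ i]
    have hrest (k : {k // k ≠ i}) : ¬ (k : ι) = i := k.2
    simp [hrest, hcy]

end Covering

lemma notMem_interior_convexHull_of_affineIndependent {V : Type*} [NormedAddCommGroup V]
    [NormedSpace ℝ V] [FiniteDimensional ℝ V] [Nontrivial V] {s : Set V}
    (hs : AffineIndependent ℝ ((↑) : s → V)) {p : V} (hp : p ∈ s) :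
    p ∉ interior (convexHull ℝ s) := by
  intro hint
  have htop : affineSpan ℝ s = ⊤ := interior_convexHull_nonempty_iff_affineSpan_eq_top.1 ⟨p, hint⟩
  have hfinite : Finite s := finite_set_of_fin_dim_affineIndependent ℝ hs
  have hnontrivial : s.Nontrivial := Set.not_subsingleton_iff.1 fun hsub ↦
    not_subsingleton V (AffineSubspace.subsingleton_of_subsingleton_span_eq_top hsub htop)
  let b : AffineBasis s ℝ V := ⟨(↑), hs, by rwa [Subtype.range_coe]⟩
  have hrange : Set.range b = s := Subtype.range_coe
  rw [← hrange, b.interior_convexHull] at hint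
  obtain ⟨q, hq, hqp⟩ := hnontrivial.exists_ne p
  exact (hint ⟨q, hq⟩).ne' (b.coord_apply_ne (i := ⟨q, hq⟩) (j := ⟨p, hp⟩) (by simpa using hqp))

end ColourfulDepth

open ColourfulDepth Finset Module in
theorem mu_four_ge_fourteen_general {ι V : Type*} [Fintype ι] [NormedAddCommGroup V]
    [NormedSpace ℝ V] (hV : 4 ≤ finrank ℝ V) (hι : Fintype.card ι = finrank ℝ V + 1)
    {S : ι → Finset V} (hcard : ∀ i, #(S i) = finrank ℝ V + 1)
    (hgen : ∀ s : Finset V, (s : Set V) ⊆ (⋃ i, (S i : Set V)) ∪ {0} → #s = finrank ℝ V + 1 →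
      AffineIndependent ℝ (fun p : s ↦ (p : V)))
    (hint : ∀ i, (0 : V) ∈ interior (convexHull ℝ (S i : Set V))) :
    14 ≤ Set.ncard {x : ι → V | (∀ i, x i ∈ S i) ∧ (0 : V) ∈ convexHull ℝ (Set.range x)} := by
  classical
  have : FiniteDimensional ℝ V := .of_finrank_pos (by omega)
  have : Nontrivial V := nontrivial_of_finrank_pos (R := ℝ) (by omega)
  have h0 : (0 : V) ∉ univ.biUnion S := fun h ↦ by
    obtain ⟨i, -, hi⟩ := mem_biUnion.1 h
    have hindep := hgen (S i) (fun v hv ↦ .inl (Set.mem_iUnion_of_mem i hv)) (hcard i)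
    exact notMem_interior_convexHull_of_affineIndependent hindep hi (hint i)
  have hunion : (univ.biUnion S : Set V) = ⋃ i, (S i : Set V) := by simp
  have hposition : LinearGeneralPosition (⋃ i, (S i : Set V)) := by
    obtain ⟨i⟩ : Nonempty ι := Fintype.card_pos_iff.1 (by omega)
    rw [← hunion]
    refine linearGeneralPosition_of_affineIndependent ?_ h0 (by simpa only [hunion] using hgen)
    calc finrank ℝ V ≤ #(S i) := by rw [hcard]; exact Nat.le_succ _
      _ ≤ #(univ.biUnion S) := card_le_card (subset_biUnion_of_mem S (mem_univ i))
  rw [ncard_setOf_zero_mem_convexHull_range]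
  exact (isOctahedral_colourfulSimplices hι hposition).fourteen_le_card (by omega)
    (fun i ↦ by rw [Fintype.card_coe, hcard]; omega) (exists_mem_colourfulSimplices hι hint)

/-- **μ(4) ≥ 14.**
Let `S 0, …, S 4` be five sets of five points each in `ℝ⁴` such that every
5-element subset of their union together with the origin is affinely independent
(general position), and such that the origin lies in the interior of the convex
hull of each `S i`.  Then the number of colourful simplices containing the
origin, i.e. the number of tuples `(x 0, …, x 4) ∈ S 0 × ⋯ × S 4` with
`0 ∈ conv {x 0, …, x 4}`, is at least `14`. -/
theorem mu_four_ge_fourteen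
    (S : Fin 5 → Finset (Fin 4 → ℝ))
    (hcard : ∀ i, (S i).card = 5)
    (hgen : ∀ s : Finset (Fin 4 → ℝ),
      (s : Set (Fin 4 → ℝ)) ⊆ (⋃ i, (S i : Set (Fin 4 → ℝ))) ∪ {0} →
      s.card = 5 →
      AffineIndependent ℝ (fun p : s => (p : Fin 4 → ℝ)))
    (hint : ∀ i, (0 : Fin 4 → ℝ) ∈ interior (convexHull ℝ (S i : Set (Fin 4 → ℝ)))) :
    14 ≤ Set.ncard {x : Fin 5 → (Fin 4 → ℝ) |
      (∀ i, x i ∈ S i) ∧ (0 : Fin 4 → ℝ) ∈ convexHull ℝ (Set.range x)} :=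
  mu_four_ge_fourteen_general (by simp) (by simp) (by simpa using hcard)
    (by simpa using hgen) hint
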